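/- Assume the sectional curvature of (𝔤, ⟨·,·⟩) is everywhere nonpositive, i.e. ⟨R(u,v)u, v⟩ ≥ 0 for all u, v ∈ 𝔤. Then every Jacobi field β along a geodesic α : [0,1] → 𝔤 with β(0) = 0 and β(1) = 0 vanishes identically. -/

import Mathlib

/-! A Jacobi field `β` makes `f = ‖β‖²` convex: as `D` is compatible with the inner product,
`f' = 2⟪β, ∇β⟫` and `f'' = 2(‖∇β‖² + ⟪β, ∇∇β⟫)`, where `⟪β, ∇∇β⟫ = ⟪R(α,β)α, β⟫ ≥ 0` by
nonpositive curvature. A nonnegative convex function vanishing at both ends of an interval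
is zero. -/

open scoped InnerProductSpace

/-- The covariant derivative `∇β = β' + D_α β` of a curve `β` along a curve `α`. -/
noncomputable def covDeriv {G : Type*} [NormedAddCommGroup G] [NormedSpace ℝ G]
    (D : G →ₗ[ℝ] G →ₗ[ℝ] G) (α β : ℝ → G) : ℝ → G :=
  fun t => deriv β t + D (α t) (β t)

/-- The curvature `R(u,v)w = D_u(D_v w) - D_v(D_u w) - D_{[u,v]}w`. -/
def curv {G : Type*} [AddCommGroup G] [Module ℝ G]
    (lie D : G →ₗ[ℝ] G →ₗ[ℝ] G) (u v w : G) : G :=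
  D u (D v w) - D v (D u w) - D (lie u v) w

/-- Compatibility of a product `D` with the inner product: every `D u` is skew-adjoint, so that
`t ↦ ⟪β t, γ t⟫` satisfies the Leibniz rule for `covDeriv`. No torsion condition is imposed. -/
def IsMetricProduct {G : Type*} [NormedAddCommGroup G] [InnerProductSpace ℝ G]
    (D : G →ₗ[ℝ] G →ₗ[ℝ] G) : Prop :=
  ∀ u : G, (innerₗ G).IsSkewAdjoint (D u)

theorem contDiff_covDeriv {G : Type*} [NormedAddCommGroup G] [NormedSpace ℝ G]
    [FiniteDimensional ℝ G] (D : G →ₗ[ℝ] G →ₗ[ℝ] G) {α β : ℝ → G} {n : WithTop ℕ∞}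
    (hα : ContDiff ℝ n α) (hβ : ContDiff ℝ (n + 1) β) : ContDiff ℝ n (covDeriv D α β) :=
  hβ.deriv'.add
    ((D.toContinuousBilinearMap.contDiff.comp hα).clm_apply (hβ.of_le le_self_add))

section MetricProduct

variable {G : Type*} [NormedAddCommGroup G] [InnerProductSpace ℝ G]
  {lie D : G →ₗ[ℝ] G →ₗ[ℝ] G} {α β γ : ℝ → G}

theorem isMetricProduct_of_koszul (hlie : lie.IsAlt)
    (hD : ∀ u v w : G,
      2 * ⟪D u v, w⟫_ℝ = ⟪lie u v, w⟫_ℝ + ⟪lie w u, v⟫_ℝ + ⟪lie w v, u⟫_ℝ) :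
    IsMetricProduct D := by
  intro u v w
  have hvw := hD u v w
  have hwv := hD u w v
  rw [← hlie.neg u w, ← hlie.neg v w, inner_neg_left, inner_neg_left] at hvw
  rw [← hlie.neg u v, inner_neg_left] at hwv
  rw [innerₗ_apply_apply, innerₗ_apply_apply, Pi.neg_apply, inner_neg_right,
    real_inner_comm (D u w) v]
  linarith

theorem IsMetricProduct.inner_left (hD : IsMetricProduct D) (u v w : G) :
    ⟪D u v, w⟫_ℝ = -⟪v, D u w⟫_ℝ := by
  simpa only [innerₗ_apply_apply, Pi.neg_apply, inner_neg_right] using hD u v w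

theorem IsMetricProduct.hasDerivAt_inner (hD : IsMetricProduct D) {t : ℝ}
    (hβ : DifferentiableAt ℝ β t) (hγ : DifferentiableAt ℝ γ t) :
    HasDerivAt (fun s => ⟪β s, γ s⟫_ℝ)
      (⟪β t, covDeriv D α γ t⟫_ℝ + ⟪covDeriv D α β t, γ t⟫_ℝ) t := by
  refine (hβ.hasDerivAt.inner ℝ hγ.hasDerivAt).congr_deriv ?_
  simp only [covDeriv, inner_add_left, inner_add_right, hD.inner_left]
  ring

theorem IsMetricProduct.hasDerivAt_norm_sq (hD : IsMetricProduct D) {t : ℝ}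
    (hβ : DifferentiableAt ℝ β t) :
    HasDerivAt (fun s => ‖β s‖ ^ 2) (2 * ⟪β t, covDeriv D α β t⟫_ℝ) t := by
  simpa only [real_inner_self_eq_norm_sq, real_inner_comm, ← two_mul]
    using hD.hasDerivAt_inner (α := α) hβ hβ

theorem IsMetricProduct.convexOn_norm_sq (hD : IsMetricProduct D) {s : Set ℝ}
    (hs : Convex ℝ s) (hcont : ContinuousOn β s)
    (hβ : ∀ t ∈ interior s, DifferentiableAt ℝ β t)
    (hβ' : ∀ t ∈ interior s, DifferentiableAt ℝ (covDeriv D α β) t)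
    (hnonneg : ∀ t ∈ interior s, 0 ≤ ⟪β t, covDeriv D α (covDeriv D α β) t⟫_ℝ) :
    ConvexOn ℝ s fun t => ‖β t‖ ^ 2 :=
  convexOn_of_hasDerivWithinAt2_nonneg hs (hcont.norm.pow 2)
    (fun t ht => (hD.hasDerivAt_norm_sq (hβ t ht)).hasDerivWithinAt)
    (fun t ht => ((hD.hasDerivAt_inner (hβ t ht) (hβ' t ht)).const_mul 2).hasDerivWithinAt)
    fun t ht => mul_nonneg zero_le_two (add_nonneg (hnonneg t ht) real_inner_self_nonneg)

theorem jacobi_field_vanishes_of_nonpos_curvature_general (hD : IsMetricProduct D)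
    (hcurv : ∀ u v : G, 0 ≤ ⟪curv lie D u v u, v⟫_ℝ) {a b : ℝ}
    (hcont : ContinuousOn β (Set.Icc a b))
    (hβ : ∀ t ∈ Set.Ioo a b, DifferentiableAt ℝ β t)
    (hβ' : ∀ t ∈ Set.Ioo a b, DifferentiableAt ℝ (covDeriv D α β) t)
    (hjacobi : ∀ t ∈ Set.Ioo a b,
      covDeriv D α (covDeriv D α β) t = curv lie D (α t) (β t) (α t))
    (ha : β a = 0) (hb : β b = 0) :
    ∀ t ∈ Set.Icc a b, β t = 0 := by
  intro t ht
  have hab : a ≤ b := ht.1.trans ht.2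
  have hconvex : ConvexOn ℝ (Set.Icc a b) fun s => ‖β s‖ ^ 2 := by
    rw [← interior_Icc] at hβ hβ' hjacobi
    refine hD.convexOn_norm_sq (convex_Icc a b) hcont hβ hβ' fun s hs => ?_
    rw [hjacobi s hs, real_inner_comm]
    exact hcurv (α s) (β s)
  have hle : ‖β t‖ ^ 2 ≤ max (‖β a‖ ^ 2) (‖β b‖ ^ 2) :=
    hconvex.le_on_segment (Set.left_mem_Icc.2 hab) (Set.right_mem_Icc.2 hab)
      (by rwa [segment_eq_Icc hab])
  simpa [ha, hb] using hle

end MetricProduct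

/-- Assume the sectional curvature of `(𝔤, ⟪·,·⟫)` is everywhere
nonpositive, i.e. `⟪R(u,v)u, v⟫ ≥ 0` for all `u v ∈ 𝔤`.  Then every Jacobi field `β`
along a geodesic `α : [0,1] → 𝔤` with `β 0 = 0` and `β 1 = 0` vanishes identically. -/
theorem jacobi_field_vanishes_of_nonpos_curvature
    {G : Type*} [NormedAddCommGroup G] [InnerProductSpace ℝ G] [FiniteDimensional ℝ G]
    (lie : G →ₗ[ℝ] G →ₗ[ℝ] G)
    (hanti : ∀ u : G, lie u u = 0)
    (hjac : ∀ u v w : G, lie u (lie v w) = lie (lie u v) w + lie v (lie u w))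
    (D : G →ₗ[ℝ] G →ₗ[ℝ] G)
    (hD : ∀ u v w : G,
      2 * ⟪D u v, w⟫_ℝ = ⟪lie u v, w⟫_ℝ + ⟪lie w u, v⟫_ℝ + ⟪lie w v, u⟫_ℝ)
    (hcurv : ∀ u v : G, 0 ≤ ⟪curv lie D u v u, v⟫_ℝ)
    (α : ℝ → G) (hα : ContDiff ℝ (⊤ : ℕ∞) α)
    (hgeo : ∀ t ∈ Set.Icc (0 : ℝ) 1, deriv α t = -(D (α t) (α t)))
    (β : ℝ → G) (hβ : ContDiff ℝ (⊤ : ℕ∞) β)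
    (hjacobi : ∀ t ∈ Set.Icc (0 : ℝ) 1,
      covDeriv D α (covDeriv D α β) t = curv lie D (α t) (β t) (α t))
    (h0 : β 0 = 0) (h1 : β 1 = 0) :
    ∀ t ∈ Set.Icc (0 : ℝ) 1, β t = 0 := by
  have hβ' : ContDiff ℝ 1 (covDeriv D α β) :=
    contDiff_covDeriv D (contDiff_infty.1 hα 1) (contDiff_infty.1 hβ 2)
  exact jacobi_field_vanishes_of_nonpos_curvature_general (isMetricProduct_of_koszul hanti hD)
    hcurv hβ.continuous.continuousOn (fun t _ => hβ.differentiable (by simp) t)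
    (fun t _ => hβ'.differentiable one_ne_zero t)
    (fun t ht => hjacobi t (Set.Ioo_subset_Icc_self ht)) h0 h1
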